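/- arXiv:1603.09006 — 3 statements merged into one kernel-verified Lean document; each statement's English description precedes it below -/
import Mathlib

section
/- Let X be a real Banach space with modulus of smoothness ρ(u), D a dictionary in X, f ∈ X, Φ_n a finite-dimensional subspace, E_n = inf_{G∈Φ_n} ‖f−G‖, G_n ∈ Φ_n with ‖f−G_n‖ ≤ (1+η_n) E_n + η'_n, f_n = f − G_n ≠ 0, and F_n a continuous linear functional with ‖F_n‖ ≤ 1 and F_n(f_n) ≥ (1−δ_n)‖f_n‖ − δ'_n (δ_n, δ'_n, η_n, η'_n ≥ 0). Let φ_{n+1} ∈ D satisfy F_n(φ_{n+1}) ≥ t_{n+1} sup_{g∈D} F_n(g) − t'_{n+1} with 0 ≤ t_{n+1} ≤ 1, t'_{n+1} ≥ 0. Take ε ≥ 0 and h ∈ X with ‖f−h‖ ≤ ε and h/A ∈ A_1(D) for some A > 0. Then |F_n(φ_{n+1})| ≥ t_{n+1} A^{−1} ( (1−δ_n)‖f_n‖ − δ'_n − β_n(G_n) − ε ) − t'_{n+1}, where β_n(φ) = inf_{λ>0} (1/λ)( δ_n + η_n + (δ'_n + η'_n)/‖f_n‖ + 2ρ(λ‖φ‖)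 ). -/
/-!
Write `fₙ = f - Gₙ`. A functional bounded above by `M` on `D` is bounded above by `M` on the closed
convex hull of `D`, so `F h ≤ A * sup_D F`. As `‖F‖ ≤ 1`, also `F h ≥ F f - ε = F fₙ + F Gₙ - ε`.
With the greedy choice of `φₙ`, it remains to show `-βₙ(Gₙ) ≤ F Gₙ`.

For this, smoothness gives `‖fₙ + v‖ + ‖fₙ - v‖ ≤ 2 ‖fₙ‖ (1 + ρ(l ‖Gₙ‖))` with `v = l ‖fₙ‖ Gₙ`.
The first norm is at least the distance from `f` to `Φ`, hence at least `(1 - η) ‖fₙ‖ - η'`; the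
second is at least `F fₙ - F v`. Rearranging bounds `-F Gₙ` for each `l > 0`
(`neg_apply_le_of_near_best`), and the infimum over `l` is `βₙ(Gₙ)`.
-/

/-- The modulus of smoothness of a real normed space `X`:
`ρ(u) = sup_{‖x‖=‖y‖=1} (‖x+uy‖+‖x−uy‖)/2 − 1`. -/
noncomputable def modS (X : Type*) [NormedAddCommGroup X] [NormedSpace ℝ X] (u : ℝ) : ℝ :=
  sSup {r : ℝ | ∃ x y : X, ‖x‖ = 1 ∧ ‖y‖ = 1 ∧ r = (‖x + u • y‖ + ‖x - u • y‖) / 2 - 1}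

/-- A dictionary in a real normed space `X`: a symmetric set of unit vectors whose
linear span is dense in `X`. -/
def IsDictionary {X : Type*} [NormedAddCommGroup X] [NormedSpace ℝ X] (D : Set X) : Prop :=
  (∀ g ∈ D, ‖g‖ = 1) ∧ (∀ g ∈ D, -g ∈ D) ∧
    Dense ((Submodule.span ℝ D : Submodule ℝ X) : Set X)

/-- The supremum defining `modS X u` is over a bounded set, by the triangle inequality. -/
lemma bddAbove_modS_set (X : Type*) [NormedAddCommGroup X] [NormedSpace ℝ X] (u : ℝ) :
    BddAbove {r : ℝ | ∃ x y : X, ‖x‖ = 1 ∧ ‖y‖ = 1 ∧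
      r = (‖x + u • y‖ + ‖x - u • y‖) / 2 - 1} := by
  refine ⟨|u|, ?_⟩
  rintro r ⟨x, y, hx, hy, rfl⟩
  have h1 := norm_add_le x (u • y)
  have h2 := norm_sub_le x (u • y)
  rw [norm_smul, hx, hy, Real.norm_eq_abs] at h1 h2
  linarith

lemma norm_add_add_norm_sub_le {X : Type*} [NormedAddCommGroup X] [NormedSpace ℝ X]
    (x z : X) (hx : ‖x‖ = 1) :
    ‖x + z‖ + ‖x - z‖ ≤ 2 + 2 * modS X ‖z‖ := by
  have key : (‖x + z‖ + ‖x - z‖) / 2 - 1 ≤ modS X ‖z‖ := by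
    apply le_csSup (bddAbove_modS_set X ‖z‖)
    by_cases hz : z = 0
    -- For `z = 0` there is no direction to normalize; any unit vector serves as `y`.
    · exact ⟨x, x, hx, hx, by simp [hz]⟩
    · have hz' : ‖z‖ ≠ 0 := norm_ne_zero_iff.mpr hz
      refine ⟨x, ‖z‖⁻¹ • z, hx, ?_, ?_⟩
      · rw [norm_smul, norm_inv, norm_norm, inv_mul_cancel₀ hz']
      · rw [smul_inv_smul₀ hz']
  linarith

lemma le_norm_of_opNorm_le_one {X : Type*} [NormedAddCommGroup X] [NormedSpace ℝ X]
    (F : X →L[ℝ] ℝ) (hF : ‖F‖ ≤ 1) (x : X) : F x ≤ ‖x‖ := by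
  have h := F.le_of_opNorm_le hF x
  rw [one_mul] at h
  exact (le_abs_self _).trans h

/-- A functional almost norming the residual `f - G` of a near-best approximation `G ∈ Φ` cannot be
very negative at `G`. -/
lemma neg_apply_le_of_near_best {X : Type*} [NormedAddCommGroup X] [NormedSpace ℝ X]
    (f : X) (Φ : Submodule ℝ X) (δ δ' η η' : ℝ) (hη : 0 ≤ η)
    (G : X) (hG : G ∈ Φ)
    (hGa : ‖f - G‖ ≤ (1 + η) * Metric.infDist f (Φ : Set X) + η')
    (hfn : f - G ≠ 0) (F : X →L[ℝ] ℝ) (hF1 : ‖F‖ ≤ 1)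
    (hF2 : (1 - δ) * ‖f - G‖ - δ' ≤ F (f - G)) (l : ℝ) (hl : 0 < l) :
    -F G ≤ l⁻¹ * (δ + η + (δ' + η') / ‖f - G‖ + 2 * modS X (l * ‖G‖)) := by
  have hN : 0 < ‖f - G‖ := norm_pos_iff.mpr hfn
  set N := ‖f - G‖ with hNdef
  -- `v` is a multiple of `G` scaled so that dividing by `N` yields the step `l • G`.
  set v : X := (N * l) • G with hv
  have hsm : ‖f - G + v‖ + ‖f - G - v‖ ≤ N * (2 + 2 * modS X (l * ‖G‖)) := by
    have h := norm_add_add_norm_sub_le (N⁻¹ • (f - G)) (l • G)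
      (by rw [norm_smul, norm_inv, Real.norm_of_nonneg hN.le, ← hNdef, inv_mul_cancel₀ hN.ne'])
    rw [norm_smul l G, Real.norm_of_nonneg hl.le] at h
    have e1 : f - G + v = N • (N⁻¹ • (f - G) + l • G) := by
      rw [smul_add, smul_inv_smul₀ hN.ne', smul_smul]
    have e2 : f - G - v = N • (N⁻¹ • (f - G) - l • G) := by
      rw [smul_sub, smul_inv_smul₀ hN.ne', smul_smul]
    rw [e1, e2, norm_smul, norm_smul, Real.norm_of_nonneg hN.le, ← mul_add]
    exact mul_le_mul_of_nonneg_left h hN.le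
  have hE : Metric.infDist f (Φ : Set X) ≤ ‖f - G + v‖ := by
    have hmem : G - v ∈ (Φ : Set X) := Φ.sub_mem hG (Φ.smul_mem _ hG)
    have h := Metric.infDist_le_dist_of_mem (x := f) hmem
    rwa [dist_eq_norm, ← sub_add] at h
  have hEN : Metric.infDist f (Φ : Set X) ≤ N := by
    have h := Metric.infDist_le_dist_of_mem (x := f) (show G ∈ (Φ : Set X) from hG)
    rwa [dist_eq_norm] at h
  have hFv : F (f - G) - N * l * F G ≤ ‖f - G - v‖ := by
    have h := le_norm_of_opNorm_le_one F hF1 (f - G - v)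
    rwa [map_sub F (f - G) v, hv, map_smul, smul_eq_mul] at h
  have hηE := mul_le_mul_of_nonneg_left hEN hη
  have hmain : N * (l * -F G) ≤
      N * (δ + η + (δ' + η') / N + 2 * modS X (l * ‖G‖)) := by
    have e : N * ((δ' + η') / N) = δ' + η' := mul_div_cancel₀ _ hN.ne'
    linarith
  rw [inv_mul_eq_div, le_div_iff₀' hl]
  exact le_of_mul_le_mul_left hmain hN

/-- A linear bound on a set passes to its closed convex hull, since a closed half-space is closed
and convex. -/
lemma apply_le_of_mem_closure_convexHull {X : Type*} [NormedAddCommGroup X] [NormedSpace ℝ X]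
    (D : Set X) (F : X →L[ℝ] ℝ) (M : ℝ) (hM : ∀ g ∈ D, F g ≤ M) (x : X)
    (hx : x ∈ closure (convexHull ℝ D)) : F x ≤ M := by
  have hc : IsClosed {y : X | F y ≤ M} := isClosed_le F.continuous continuous_const
  have hconv : Convex ℝ {y : X | F y ≤ M} := convex_halfSpace_le F.isLinear M
  exact closure_minimal (convexHull_min hM hconv) hc hx

/-- **Lemma 3.** With `X`, `D`, `f`, `Φₙ`, `Gₙ`, `fₙ = f − Gₙ ≠ 0`, `Fₙ`
as in the gAWCGA setting, let `φ_{n+1} ∈ D` satisfy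
`Fₙ(φ_{n+1}) ≥ t_{n+1} sup_{g∈D} Fₙ(g) − t'_{n+1}`.  Take `ε ≥ 0` and `h ∈ X` with
`‖f − h‖ ≤ ε` and `h/A ∈ A₁(D)` for some `A > 0`.  Then
`|Fₙ(φ_{n+1})| ≥ t_{n+1} A⁻¹ ((1−δₙ)‖fₙ‖ − δ'ₙ − βₙ(Gₙ) − ε) − t'_{n+1}`. -/
theorem abs_apply_next_ge
    {X : Type*} [NormedAddCommGroup X] [NormedSpace ℝ X] [CompleteSpace X]
    (D : Set X) (hD : IsDictionary D)
    (f : X) (Φ : Submodule ℝ X) [FiniteDimensional ℝ Φ]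
    (δ δ' η η' t t' : ℝ)
    (hδ : 0 ≤ δ) (hδ' : 0 ≤ δ') (hη : 0 ≤ η) (hη' : 0 ≤ η')
    (ht0 : 0 ≤ t) (ht1 : t ≤ 1) (ht' : 0 ≤ t')
    (Gn : X) (hGmem : Gn ∈ Φ)
    (hGapprox : ‖f - Gn‖ ≤ (1 + η) * Metric.infDist f (Φ : Set X) + η')
    (hfn : f - Gn ≠ 0)
    (F : X →L[ℝ] ℝ) (hF1 : ‖F‖ ≤ 1)
    (hF2 : (1 - δ) * ‖f - Gn‖ - δ' ≤ F (f - Gn))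
    (φn : X) (hφnD : φn ∈ D)
    (hφnsel : t * sSup ((fun g => F g) '' D) - t' ≤ F φn)
    (ε : ℝ) (hε : 0 ≤ ε) (h : X) (A : ℝ) (hA : 0 < A)
    (hfh : ‖f - h‖ ≤ ε) (hhA : A⁻¹ • h ∈ closure (convexHull ℝ D)) :
    t * A⁻¹ * ((1 - δ) * ‖f - Gn‖ - δ' -
        sInf ((fun l : ℝ =>
          l⁻¹ * (δ + η + (δ' + η') / ‖f - Gn‖ + 2 * modS X (l * ‖Gn‖))) '' Set.Ioi 0)
        - ε) - t'
      ≤ |F φn| := by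
  set β := sInf ((fun l : ℝ =>
    l⁻¹ * (δ + η + (δ' + η') / ‖f - Gn‖ + 2 * modS X (l * ‖Gn‖))) '' Set.Ioi 0)
  set M := sSup ((fun g => F g) '' D)
  have hβ : -F Gn ≤ β := by
    refine le_csInf (Set.nonempty_Ioi.image _) ?_
    rintro _ ⟨l, hl, rfl⟩
    exact neg_apply_le_of_near_best f Φ δ δ' η η' hη Gn hGmem hGapprox hfn F hF1 hF2 l hl
  have hbdd : BddAbove ((fun g => F g) '' D) := by
    refine ⟨1, ?_⟩
    rintro _ ⟨g, hg, rfl⟩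
    exact (le_norm_of_opNorm_le_one F hF1 g).trans (hD.1 g hg).le
  have hh : A⁻¹ * F h ≤ M := by
    have h1 := apply_le_of_mem_closure_convexHull D F M
      (fun g hg => le_csSup hbdd ⟨g, hg, rfl⟩) _ hhA
    rwa [map_smul, smul_eq_mul] at h1
  have hfε : F f - F h ≤ ε := by
    rw [← map_sub]
    exact (le_norm_of_opNorm_le_one F hF1 _).trans hfh
  have hlow : (1 - δ) * ‖f - Gn‖ - δ' - β - ε ≤ F h := by
    rw [map_sub] at hF2
    linarith
  have hAM := (mul_le_mul_of_nonneg_left hlow (inv_nonneg.mpr hA.le)).trans hh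
  have htM := mul_le_mul_of_nonneg_left hAM ht0
  rw [← mul_assoc] at htM
  linarith [le_abs_self (F φn)]
end

section
/- For every a ∈ ℓ_∞, the non-negative sequence {ν_n(a)} satisfies, for all n ≥ 1, sup_{k≤n} |a_k| ≤ ν_n(a) ≤ 2^{Σ_{k=2}^n 1/q_k} · max_{1≤k≤n} |a_k|; consequently the limit ‖a‖_{X*} = lim_{n→∞} ν_n(a) satisfies ‖a‖_∞ ≤ ‖a‖_{X*} ≤ ρ^{−1} ‖a‖_∞, where ρ = 2^{−Σ_{k=1}^∞ (1 − 1/p_k)} > 0. -/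
/-!
Write `ν_n(a)` for `vth q n a`. The two-term `ℓ_q` expression satisfies
`max x y ≤ (x ^ q + y ^ q) ^ (1 / q) ≤ 2 ^ (1 / q) * max x y`
for `x, y ≥ 0` and `q > 0`. The left inequality (`le_two_term`) makes `ν_n(a)` non-decreasing in `n` and at least `|a_k|`
for each `k < n`. The right one (`two_term_le`) says that each step past the first costs at most a factor
`2 ^ (1 / q_n)`; the first step is free because `ν_0 = 0`, so `ν_1(a) = |a_0|` exactly. Hence
`ν_n(a) ≤ 2 ^ (∑_{1 ≤ k < n} 1 / q_k) * max_{k < n} |a_k|`. Since `1 / q_k = 1 - 1 / p_k` is summable,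
the monotone sequence `ν_n(a)` is bounded, so it converges to its supremum and the bounds pass to
the limit.
-/

open Filter Topology

/-- The recursively defined functionals `ϑ_n` (0-based indexing: the exponent
`p k` here is the paper's `p_{k+1}`, and the coordinate `x k` is the paper's
`x_{k+1}`): `ϑ_0(x) = 0` and
`ϑ_{n+1}(x) = (ϑ_n(x)^{p n} + |x n|^{p n})^{1/(p n)}`; `ϑ_n` depends only on the
first `n` coordinates of `x`. -/
noncomputable def vth (p : ℕ → ℝ) : ℕ → (ℕ → ℝ) → ℝ
  | 0, _ => 0
  | n + 1, x => (vth p n x ^ p n + |x n| ^ p n) ^ (1 / p n)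

lemma le_two_term {q x y : ℝ} (hq : 0 < q) (hx : 0 ≤ x) (hy : 0 ≤ y) :
    x ≤ (x ^ q + y ^ q) ^ (1 / q) := by
  calc x = (x ^ q) ^ (1 / q) := by rw [one_div, Real.rpow_rpow_inv hx hq.ne']
    _ ≤ _ := by
      have := Real.rpow_nonneg hy q
      exact Real.rpow_le_rpow (Real.rpow_nonneg hx q) (by linarith) (by positivity)

lemma two_term_le {q x y M : ℝ} (hq : 0 < q) (hx : 0 ≤ x) (hy : 0 ≤ y) (hxM : x ≤ M)
    (hyM : y ≤ M) : (x ^ q + y ^ q) ^ (1 / q) ≤ 2 ^ (1 / q) * M := by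
  have hM : 0 ≤ M := hx.trans hxM
  calc (x ^ q + y ^ q) ^ (1 / q) ≤ (2 * M ^ q) ^ (1 / q) := by
        have h1 := Real.rpow_le_rpow hx hxM hq.le
        have h2 := Real.rpow_le_rpow hy hyM hq.le
        exact Real.rpow_le_rpow (by positivity) (by linarith) (by positivity)
    _ = 2 ^ (1 / q) * M := by
        rw [Real.mul_rpow (by norm_num) (by positivity)]
        congr 1
        rw [one_div, Real.rpow_rpow_inv hM hq.ne']

lemma vth_nonneg (q : ℕ → ℝ) (a : ℕ → ℝ) : ∀ n, 0 ≤ vth q n a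
  | 0 => le_rfl
  | n + 1 => by
    have := vth_nonneg q a n
    simp only [vth]
    positivity

lemma vth_monotone {q : ℕ → ℝ} (hq : ∀ n, 0 < q n) (a : ℕ → ℝ) :
    Monotone (fun n => vth q n a) :=
  monotone_nat_of_le_succ fun n => le_two_term (hq n) (vth_nonneg q a n) (abs_nonneg _)

lemma abs_le_vth {q : ℕ → ℝ} (hq : ∀ n, 0 < q n) (a : ℕ → ℝ) {k n : ℕ} (hk : k < n) :
    |a k| ≤ vth q n a := by
  refine le_trans ?_ (vth_monotone hq a (Nat.succ_le_of_lt hk))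
  simp only [vth]
  rw [add_comm]
  exact le_two_term (hq k) (abs_nonneg _) (vth_nonneg q a k)

/-- The upper bound with an arbitrary common bound `M` in place of the maximum: keeping `M` fixed
makes the induction go through, and `M = ‖a‖` gives the bound for the limit. -/
lemma vth_le {q : ℕ → ℝ} (hq : ∀ n, 0 < q n) (a : ℕ → ℝ) {M : ℝ} {n : ℕ} (hn : 1 ≤ n)
    (hM : ∀ k < n, |a k| ≤ M) : vth q n a ≤ 2 ^ (∑ k ∈ Finset.Ico 1 n, 1 / q k) * M := by
  induction n, hn using Nat.le_induction with
  | base =>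
    have h : vth q 1 a = |a 0| := by
      simp only [vth]
      rw [Real.zero_rpow (hq 0).ne', zero_add, one_div, Real.rpow_rpow_inv (abs_nonneg _) (hq 0).ne']
    simpa [h] using hM 0 one_pos
  | succ n hn ih =>
    have hM0 : 0 ≤ M := (abs_nonneg _).trans (hM 0 n.succ_pos)
    have hS : 1 ≤ (2 : ℝ) ^ (∑ k ∈ Finset.Ico 1 n, 1 / q k) :=
      Real.one_le_rpow one_le_two (Finset.sum_nonneg fun k _ => (one_div_pos.2 (hq k)).le)
    have h := two_term_le (hq n) (vth_nonneg q a n) (abs_nonneg (a n))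
      (ih fun k hk => hM k (hk.trans n.lt_succ_self))
      ((hM n n.lt_succ_self).trans (le_mul_of_one_le_left hM0 hS))
    rw [Finset.sum_Ico_succ_top hn, Real.rpow_add two_pos, mul_comm (_ ^ _) (_ ^ (1 / q n)),
      mul_assoc]
    exact h

/-- With `q_n = p_n/(p_n − 1)`, for every bounded sequence `a ∈ ℓ_∞`
and every `n ≥ 1`:
`sup_{k≤n} |a_k| ≤ ν_n(a) ≤ 2^{Σ_{k=2}^n 1/q_k} max_{1≤k≤n} |a_k|`
(here `ν_n = vth q n`, 0-based, so the exponent sum is over indices `1 ≤ k < n`);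
consequently `‖a‖_{X*} = lim_n ν_n(a)` exists and
`‖a‖_∞ ≤ ‖a‖_{X*} ≤ ρ⁻¹ ‖a‖_∞` with `ρ = 2^{−Σ (1−1/p_k)}`. -/
theorem nu_equiv_linfty (p : ℕ → ℝ) (hp : ∀ n, 1 < p n) (hpa : Antitone p)
    (hsum : Summable (fun n => 1 - 1 / p n))
    (q : ℕ → ℝ) (hq : ∀ n, q n = p n / (p n - 1))
    (a : lp (fun _ : ℕ => ℝ) ⊤) :
    (∀ n, ∀ hn : 1 ≤ n,
      (∀ k < n, |(a : ℕ → ℝ) k| ≤ vth q n ↑a) ∧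
      vth q n ↑a ≤ 2 ^ (∑ k ∈ Finset.Ico 1 n, 1 / q k) *
        (Finset.range n).sup' (Finset.nonempty_range_iff.mpr (by omega))
          (fun k => |(a : ℕ → ℝ) k|)) ∧
    Tendsto (fun n => vth q n ↑a) atTop (𝓝 (⨆ n, vth q n ↑a)) ∧
    ‖a‖ ≤ (⨆ n, vth q n ↑a) ∧
    (⨆ n, vth q n ↑a) ≤ ((2 : ℝ) ^ (-(∑' n, (1 - 1 / p n))))⁻¹ * ‖a‖ := by
  have hq0 : ∀ n, 0 < q n := fun n => by
    rw [hq]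
    exact div_pos (one_pos.trans (hp n)) (sub_pos.2 (hp n))
  have hqp : ∀ n, 1 / q n = 1 - 1 / p n := fun n => by
    have h1 := (one_pos.trans (hp n)).ne'
    have h2 := (sub_pos.2 (hp n)).ne'
    rw [hq]
    field_simp
  have hmono := vth_monotone hq0 (a : ℕ → ℝ)
  have hbound : ∀ n, vth q n ↑a ≤ ((2 : ℝ) ^ (-(∑' n, (1 - 1 / p n))))⁻¹ * ‖a‖ := fun n => by
    rw [Real.rpow_neg two_pos.le, inv_inv]
    -- By monotonicity it suffices to bound the next term, which has a positive index.
    calc vth q n ↑a ≤ vth q (n + 1) ↑a := hmono n.le_succ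
      _ ≤ 2 ^ (∑ k ∈ Finset.Ico 1 (n + 1), 1 / q k) * ‖a‖ :=
        vth_le hq0 _ n.succ_pos fun k _ => lp.norm_apply_le_norm ENNReal.top_ne_zero a k
      _ ≤ 2 ^ (∑' n, (1 - 1 / p n)) * ‖a‖ := by
        refine mul_le_mul_of_nonneg_right ?_ (norm_nonneg a)
        refine Real.rpow_le_rpow_of_exponent_le one_le_two ?_
        simp only [hqp]
        exact hsum.sum_le_tsum _ fun k _ => by
          rw [← hqp]
          exact (one_div_pos.2 (hq0 k)).le
  have hbdd : BddAbove (Set.range fun n => vth q n (a : ℕ → ℝ)) :=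
    ⟨_, Set.forall_mem_range.2 hbound⟩
  refine ⟨fun n hn => ⟨fun k hk => abs_le_vth hq0 _ hk, vth_le hq0 _ hn fun k hk => ?_⟩,
    tendsto_atTop_ciSup hmono hbdd, ?_, ciSup_le hbound⟩
  · exact Finset.le_sup' (fun k => |(a : ℕ → ℝ) k|) (Finset.mem_range.2 hk)
  · exact lp.norm_le_of_forall_le ((vth_nonneg q a 0).trans (le_ciSup hbdd 0)) fun k =>
      (abs_le_vth hq0 (a : ℕ → ℝ) k.lt_succ_self).trans (le_ciSup hbdd (k + 1))
end

section
/- For every x ∈ ℓ₁ and every a ∈ ℓ_∞, and for every N ∈ ℕ, one has Σ_{n=1}^N |a_n| |x_n| ≤ ν_N(a) ϑ_N(x); consequently the series a(x) = Σ_{n=1}^∞ a_n x_n converges absolutely and |a(x)| ≤ ‖a‖_{X*} · ‖x‖_X. -/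
/-!
Each step of the two recursions is a two-term `ℓ_p` or `ℓ_q` norm with conjugate exponents, so
Hölder's inequality for two terms, applied at each step, gives the finite inequality
(`sum_mul_le_vth`).

The passage to the limit needs both suprema to be over bounded sequences. For `ϑ`, the two-term
`ℓ_p` norm is at most the `ℓ₁` norm, whence `ϑ_n(x) ≤ Σ |x_k|` (`vth_le_sum`). For `ν`, one step
costs at most a factor `2^{1/q_n}` over the maximum, whence
`ν_n(a) ≤ 2^{1/q_1 + ⋯ + 1/q_n} ‖a‖_∞` (`vth_le_two_rpow_mul`); this is bounded because
`1/q_n = 1 - 1/p_n` is summable.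
-/

open Filter Topology

lemma vth_nonneg_s14 (p : ℕ → ℝ) (n : ℕ) (x : ℕ → ℝ) : 0 ≤ vth p n x := by
  induction n with
  | zero => exact le_rfl
  | succ n ih => simp only [vth]; positivity

lemma two_term_holder {p q u v s t : ℝ} (h : q.HolderConjugate p)
    (hu : 0 ≤ u) (hv : 0 ≤ v) (hs : 0 ≤ s) (ht : 0 ≤ t) :
    u * s + v * t ≤ (u ^ q + v ^ q) ^ (1 / q) * (s ^ p + t ^ p) ^ (1 / p) := by
  have := Real.inner_le_Lp_mul_Lq Finset.univ ![u, v] ![s, t] h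
  simpa [Fin.sum_univ_two, abs_of_nonneg, hu, hv, hs, ht] using this

lemma sum_mul_le_vth {p q : ℕ → ℝ} (h : ∀ n, (q n).HolderConjugate (p n)) (a x : ℕ → ℝ) (N : ℕ) :
    ∑ n ∈ Finset.range N, |a n| * |x n| ≤ vth q N a * vth p N x := by
  induction N with
  | zero => simp [vth]
  | succ n ih =>
    rw [Finset.sum_range_succ]
    exact (add_le_add_left ih _).trans (two_term_holder (h n) (vth_nonneg_s14 q n a) (abs_nonneg _)
      (vth_nonneg_s14 p n x) (abs_nonneg _))

lemma vth_le_sum {p : ℕ → ℝ} (hp : ∀ n, 1 ≤ p n) (x : ℕ → ℝ) (N : ℕ) :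
    vth p N x ≤ ∑ n ∈ Finset.range N, |x n| := by
  induction N with
  | zero => simp [vth]
  | succ n ih =>
    rw [Finset.sum_range_succ]
    exact (Real.rpow_add_rpow_le_add (vth_nonneg_s14 p n x) (abs_nonneg _) (hp n)).trans
      (add_le_add_left ih _)

lemma vth_le_two_rpow_mul {q : ℕ → ℝ} (hq : ∀ n, 0 < q n) {a : ℕ → ℝ} {M : ℝ}
    (ha : ∀ n, |a n| ≤ M) (N : ℕ) :
    vth q N a ≤ 2 ^ (∑ n ∈ Finset.range N, 1 / q n) * M := by
  have hM : 0 ≤ M := (abs_nonneg _).trans (ha 0)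
  induction N with
  | zero => simpa [vth] using hM
  | succ n ih =>
    set S := ∑ k ∈ Finset.range n, 1 / q k with hS
    have hS0 : 0 ≤ S := Finset.sum_nonneg fun k _ => (one_div_pos.2 (hq k)).le
    have hB : 0 ≤ (2 : ℝ) ^ S * M := by positivity
    -- Both entries of the two-term norm are at most `2 ^ S * M`, as `2 ^ S ≥ 1`.
    have haB : |a n| ≤ 2 ^ S * M :=
      (ha n).trans (le_mul_of_one_le_left hM (Real.one_le_rpow one_le_two hS0))
    have h0 := vth_nonneg_s14 q n a
    have hqn := hq n
    rw [Finset.sum_range_succ, ← hS]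
    calc vth q (n + 1) a = (vth q n a ^ q n + |a n| ^ q n) ^ (1 / q n) := rfl
      _ ≤ ((2 ^ S * M) ^ q n + (2 ^ S * M) ^ q n) ^ (1 / q n) := by gcongr
      _ = (2 * (2 ^ S * M) ^ q n) ^ (1 / q n) := by rw [two_mul]
      _ = 2 ^ (S + 1 / q n) * M := by
        rw [Real.mul_rpow zero_le_two (by positivity), ← Real.rpow_mul hB,
          mul_one_div_cancel hqn.ne', Real.rpow_one, Real.rpow_add two_pos]
        ring

/-- With `q_n = p_n/(p_n − 1)`, for every `x ∈ ℓ₁` and `a ∈ ℓ_∞`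
and every `N`: `Σ_{n<N} |a_n||x_n| ≤ ν_N(a) ϑ_N(x)`; consequently the series
`a(x) = Σ a_n x_n` converges absolutely and `|a(x)| ≤ ‖a‖_{X*} ‖x‖_X`. -/
theorem duality_pairing (p : ℕ → ℝ) (hp : ∀ n, 1 < p n) (hpa : Antitone p)
    (hsum : Summable (fun n => 1 - 1 / p n))
    (q : ℕ → ℝ) (hq : ∀ n, q n = p n / (p n - 1))
    (x : lp (fun _ : ℕ => ℝ) 1) (a : lp (fun _ : ℕ => ℝ) ⊤) :
    (∀ N : ℕ, ∑ n ∈ Finset.range N, |(a : ℕ → ℝ) n| * |(x : ℕ → ℝ) n| ≤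
      vth q N ↑a * vth p N ↑x) ∧
    Summable (fun n => |(a : ℕ → ℝ) n * (x : ℕ → ℝ) n|) ∧
    |∑' n, (a : ℕ → ℝ) n * (x : ℕ → ℝ) n| ≤
      (⨆ n, vth q n ↑a) * (⨆ n, vth p n ↑x) := by
  have hconj : ∀ n, (q n).HolderConjugate (p n) := fun n => by
    rw [hq n]; exact (Real.HolderConjugate.conjExponent (hp n)).symm
  have hq0 : ∀ n, 0 < q n := fun n => (hconj n).pos
  have hqp : ∀ n, 1 / q n = 1 - 1 / p n := fun n => by
    have := (hconj n).inv_add_inv_eq_one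
    simp only [one_div]; linarith
  have hx : Summable fun n => |(x : ℕ → ℝ) n| := by
    simpa using (lp.memℓp x).summable (by simp)
  have bx : BddAbove (Set.range fun n => vth p n (x : ℕ → ℝ)) := by
    refine ⟨∑' n, |(x : ℕ → ℝ) n|, ?_⟩
    rintro _ ⟨n, rfl⟩
    exact (vth_le_sum (fun k => (hp k).le) _ n).trans
      (hx.sum_le_tsum _ fun _ _ => abs_nonneg _)
  have ba : BddAbove (Set.range fun n => vth q n (a : ℕ → ℝ)) := by
    refine ⟨2 ^ (∑' n, (1 - 1 / p n)) * ‖a‖, ?_⟩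
    rintro _ ⟨n, rfl⟩
    refine (vth_le_two_rpow_mul hq0 (fun k => lp.norm_apply_le_norm ENNReal.top_ne_zero a k)
      n).trans (mul_le_mul_of_nonneg_right (Real.rpow_le_rpow_of_exponent_le one_le_two ?_)
        (norm_nonneg a))
    simp only [hqp]
    exact hsum.sum_le_tsum _ fun k _ => by rw [← hqp]; exact (one_div_pos.2 (hq0 k)).le
  have hfin := sum_mul_le_vth hconj (a : ℕ → ℝ) (x : ℕ → ℝ)
  have hbd : ∀ N, ∑ n ∈ Finset.range N, |(a : ℕ → ℝ) n * (x : ℕ → ℝ) n| ≤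
      (⨆ n, vth q n ↑a) * (⨆ n, vth p n ↑x) := fun N => by
    simp only [abs_mul]
    exact (hfin N).trans (mul_le_mul (le_ciSup ba N) (le_ciSup bx N) (vth_nonneg_s14 _ _ _)
      (Real.iSup_nonneg fun n => vth_nonneg_s14 _ _ _))
  have hs : Summable fun n => |(a : ℕ → ℝ) n * (x : ℕ → ℝ) n| :=
    summable_of_sum_range_le (fun _ => abs_nonneg _) hbd
  refine ⟨hfin, hs, ?_⟩
  have ht : |∑' n, (a : ℕ → ℝ) n * (x : ℕ → ℝ) n| ≤ ∑' n, |(a : ℕ → ℝ) n * (x : ℕ → ℝ) n| := by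
    simp only [← Real.norm_eq_abs] at hs ⊢
    exact norm_tsum_le_tsum_norm hs
  exact ht.trans (Real.tsum_le_of_sum_range_le (fun _ => abs_nonneg _) hbd)
end
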